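/- arXiv:1904.05691 — 8 statements merged into one kernel-verified Lean document; each statement's English description precedes it below -/
import Mathlib

section
/- Let (K,M) be a coherent cellular category. Suppose f: A → B and g: A → C are morphisms in M, u: B → D and v: C → D are morphisms in M with u ∘ f = v ∘ g, and m: D → E is a morphism in M. Then the square (f, g, u, v) is cellular if and only if the square (f, g, m ∘ u, m ∘ v) is cellular. (In other words, cellular squares form an independence notion on the subcategory K_M of morphisms in M.) -/
open CategoryTheory CategoryTheory.Limits

universe v u

namespace Paper

/-- A preorder `I` is `κ`-directed if every subset of cardinality `< κ` has an upper bound. -/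
def IsCardinalDirected (κ : Cardinal.{v}) (I : Type v) [Preorder I] : Prop :=
  ∀ S : Set I, Cardinal.mk S < κ → ∃ j : I, ∀ i ∈ S, i ≤ j

section Cellular

variable {K : Type u} [Category.{v} K]

/-- The canonical cocone, with apex `F.obj j`, over the restriction of a chain `F` to `Set.Iio j`. -/
@[simps]
def chainCocone {J : Type v} [Preorder J] (F : J ⥤ K) (j : J) :
    Cocone ((Monotone.functor (f := (Subtype.val : Set.Iio j → J)) fun _ _ h => h) ⋙ F) where
  pt := F.obj j
  ι :=
    { app := fun i => F.map (homOfLE i.2.le)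
      naturality := fun i i' h => by
        dsimp [Monotone.functor]
        rw [Category.comp_id, ← F.map_comp]
        rfl }

variable [HasColimits K]

/-- `M` is closed under transfinite compositions: for every smooth chain indexed by a
well-ordered set, all of whose successor maps lie in `M`, the canonical morphism from the
first object to the colimit lies in `M`. -/
def TransfiniteClosed (M : MorphismProperty K) : Prop :=
  ∀ (J : Type v) (_ : LinearOrder J) (_ : OrderBot J) (_ : SuccOrder J) (_ : WellFoundedLT J)
    (F : J ⥤ K),
    (∀ j : J, Order.IsSuccLimit j → Nonempty (IsColimit (chainCocone F j))) →
    (∀ j : J, ¬IsMax j → M (F.map (homOfLE (Order.le_succ j)))) →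
    ∀ c : Cocone F, IsColimit c → M (c.ι.app ⊥)

/-- A cellular category: a cocomplete category equipped with a class of morphisms containing
all isomorphisms and closed under pushouts and transfinite compositions. -/
class CellularCategory (K : Type u) [Category.{v} K] [HasColimits K]
    (M : MorphismProperty K) : Prop where
  iso_mem : ∀ {X Y : K} (f : X ⟶ Y), IsIso f → M f
  comp_mem : ∀ {X Y Z : K} (f : X ⟶ Y) (g : Y ⟶ Z), M f → M g → M (f ≫ g)
  pushout_mem : ∀ {A B A' P : K} (f : A ⟶ B) (g : A ⟶ A') (u : B ⟶ P) (v : A' ⟶ P),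
    IsPushout f g u v → M f → M v
  transfinite_mem : TransfiniteClosed M

/-- A commutative square `(f, g, u, v)` is cellular if the induced morphism from the pushout
of the span `(f, g)` to the lower right corner lies in `M`. -/
def IsCellularSquare (M : MorphismProperty K) {A B C D : K}
    (f : A ⟶ B) (g : A ⟶ C) (u : B ⟶ D) (v : C ⟶ D) : Prop :=
  ∃ w : f ≫ u = g ≫ v, M (pushout.desc u v w)

/-- A morphism of the arrow category is a cellular square (all four morphisms in `M` and
the induced morphism from the pushout in `M`). -/
def CellularHom (M : MorphismProperty K) : ∀ ⦃X Y : Arrow K⦄, (X ⟶ Y) → Prop :=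
  fun X Y sq => M sq.left ∧ M sq.right ∧ IsCellularSquare M sq.left X.hom Y.hom sq.right

/-- `(K, M)` is coherent. -/
def Coherent (M : MorphismProperty K) : Prop :=
  ∀ {X Y Z : K} (f : X ⟶ Y) (g : Y ⟶ Z), M (f ≫ g) → M g → M f


/-- `(K, M)` has effective unions: pullbacks of cospans in `M` exist with projections in `M`,
and every pullback square of morphisms of `M` is a cellular square. -/
def EffectiveUnions (M : MorphismProperty K) : Prop :=
  (∀ {B C D : K} (u : B ⟶ D) (v : C ⟶ D), M u → M v →
    ∃ (A : K) (f : A ⟶ B) (g : A ⟶ C), M f ∧ M g ∧ IsPullback f g u v) ∧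
  ∀ {A B C D : K} (f : A ⟶ B) (g : A ⟶ C) (u : B ⟶ D) (v : C ⟶ D),
    M f → M g → M u → M v → IsPullback f g u v → IsCellularSquare M f g u v

end Cellular

section Retract

variable {K : Type u} [Category.{v} K]

/-- `f` is a retract of `f'` in the arrow category. -/
def IsArrowRetract {A B A' B' : K} (f : A ⟶ B) (f' : A' ⟶ B') : Prop :=
  ∃ (iA : A ⟶ A') (iB : B ⟶ B') (rA : A' ⟶ A) (rB : B' ⟶ B),
    iA ≫ rA = 𝟙 A ∧ iB ≫ rB = 𝟙 B ∧ iA ≫ f' = f ≫ iB ∧ rA ≫ f = f' ≫ rB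

/-- `M` is closed under retracts in the arrow category. -/
def RetractClosed (M : MorphismProperty K) : Prop :=
  ∀ {A B A' B' : K} (f : A ⟶ B) (f' : A' ⟶ B'), IsArrowRetract f f' → M f' → M f

end Retract

section Sub

variable {C : Type u} [Category.{v} C]
variable (Obj : C → Prop) (Hom : ∀ ⦃X Y : C⦄, (X ⟶ Y) → Prop)

/-- `F` is a diagram lying in the (not necessarily full) subcategory determined by
the object predicate `Obj` and the morphism predicate `Hom`. -/
def SubDiagram {I : Type*} [Preorder I] (F : I ⥤ C) : Prop :=
  (∀ i, Obj (F.obj i)) ∧ ∀ (i j : I) (h : i ⟶ j), Hom (F.map h)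

/-- `c` is a colimit cocone for `F` in the subcategory determined by `Obj` and `Hom`:
its apex and legs lie in the subcategory, and it enjoys the universal property with
respect to all cocones lying in the subcategory. -/
def SubIsColimit {I : Type*} [Preorder I] {F : I ⥤ C} (c : Cocone F) : Prop :=
  Obj c.pt ∧ (∀ i, Hom (c.ι.app i)) ∧
    ∀ c' : Cocone F, Obj c'.pt → (∀ i, Hom (c'.ι.app i)) →
      ∃ m : c.pt ⟶ c'.pt, Hom m ∧ (∀ i, c.ι.app i ≫ m = c'.ι.app i) ∧
        ∀ m' : c.pt ⟶ c'.pt, Hom m' → (∀ i, c.ι.app i ≫ m' = c'.ι.app i) → m' = m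

/-- `X` is a `κ`-presentable object of the subcategory determined by `Obj` and `Hom`. -/
def SubPresentable (κ : Cardinal.{v}) (X : C) : Prop :=
  ∀ I : Preord.{v}, IsCardinalDirected κ I →
    ∀ F : I ⥤ C, SubDiagram Obj Hom F → ∀ c : Cocone F, SubIsColimit Obj Hom c →
      (∀ h : X ⟶ c.pt, Hom h → ∃ (i : I) (g : X ⟶ F.obj i), Hom g ∧ g ≫ c.ι.app i = h) ∧
      (∀ (i : I) (g g' : X ⟶ F.obj i), Hom g → Hom g' → g ≫ c.ι.app i = g' ≫ c.ι.app i →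
        ∃ (j : I) (hij : i ≤ j), g ≫ F.map hij.hom = g' ≫ F.map hij.hom)

/-- The subcategory determined by `Obj` and `Hom` has `κ`-directed colimits. -/
def SubHasDirectedColimits (κ : Cardinal.{v}) : Prop :=
  ∀ I : Preord.{v}, IsCardinalDirected κ I →
    ∀ F : I ⥤ C, SubDiagram Obj Hom F → ∃ c : Cocone F, SubIsColimit Obj Hom c

/-- The subcategory determined by `Obj` and `Hom` is a `κ`-accessible category:
it has `κ`-directed colimits and every object is a `κ`-directed colimit of
`κ`-presentable objects of the subcategory. -/
def SubAccessible (κ : Cardinal.{v}) : Prop :=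
  SubHasDirectedColimits Obj Hom κ ∧
    ∀ X : C, Obj X → ∃ (I : Preord.{v}) (F : I ⥤ C) (c : Cocone F),
      IsCardinalDirected κ I ∧ SubDiagram Obj Hom F ∧
      (∀ i, SubPresentable Obj Hom κ (F.obj i)) ∧ SubIsColimit Obj Hom c ∧ c.pt = X

/-- The subcategory determined by `Obj` and `Hom` is closed under `κ`-directed colimits in `C`. -/
def SubClosed (κ : Cardinal.{v}) : Prop :=
  ∀ I : Preord.{v}, IsCardinalDirected κ I →
    ∀ F : I ⥤ C, SubDiagram Obj Hom F →
      ∀ c : Cocone F, IsColimit c → SubIsColimit Obj Hom c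

end Sub

section Access

variable (K : Type u) [Category.{v} K]

/-- `K` is a `κ`-accessible category. -/
def AccessibleCat (κ : Cardinal.{v}) : Prop :=
  SubAccessible (fun _ : K => True) (fun _ _ _ => True) κ

/-- `A` is a `κ`-presentable object of `K`. -/
def PresentableObj (κ : Cardinal.{v}) (A : K) : Prop :=
  SubPresentable (fun _ : K => True) (fun _ _ _ => True) κ A

variable {K}
variable (M : MorphismProperty K)

/-- `(K, M)` is `κ`-continuous: the wide subcategory `K_M` is closed under `κ`-directed
colimits in `K`. -/
def MContinuous (κ : Cardinal.{v}) : Prop :=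
  SubClosed (fun _ : K => True) M κ

/-- `(K, M)` is a `κ`-accessible cellular category: it is `κ`-continuous and both `K` and the
wide subcategory `K_M` are `κ`-accessible. -/
def MAccessible (κ : Cardinal.{v}) : Prop :=
  MContinuous M κ ∧ AccessibleCat K κ ∧ SubAccessible (fun _ : K => True) M κ

/-- The morphisms of `M` with `κ`-presentable domain and codomain. -/
def MBetweenPresentable (κ : Cardinal.{v}) : MorphismProperty K :=
  fun A B f => M f ∧ PresentableObj K κ A ∧ PresentableObj K κ B

end Access

section Cof

variable {K : Type u} [Category.{v} K]

/-- The closure of a class of morphisms under pushouts, transfinite compositions and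
retracts. -/
inductive CofClosure (X : MorphismProperty K) : ∀ {A B : K}, (A ⟶ B) → Prop
  | of {A B : K} (f : A ⟶ B) : X f → CofClosure X f
  | pushout {A B A' P : K} (f : A ⟶ B) (g : A ⟶ A') (u : B ⟶ P) (v : A' ⟶ P) :
      IsPushout f g u v → CofClosure X f → CofClosure X v
  | retract {A B A' B' : K} (f : A ⟶ B) (f' : A' ⟶ B') :
      IsArrowRetract f f' → CofClosure X f' → CofClosure X f
  | transfinite (J : Type v) (_ : LinearOrder J) (_ : OrderBot J) (_ : SuccOrder J)
      (_ : WellFoundedLT J) (F : J ⥤ K) :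
      (∀ j : J, Order.IsSuccLimit j → Nonempty (IsColimit (chainCocone F j))) →
      (∀ j : J, ¬IsMax j → CofClosure X (F.map (homOfLE (Order.le_succ j)))) →
      ∀ c : Cocone F, IsColimit c → CofClosure X (c.ι.app ⊥)

/-- The morphism property generated by a family of morphisms. -/
inductive OfFamily {ι : Type v} {A B : ι → K} (x : ∀ i, A i ⟶ B i) : ∀ {X Y : K}, (X ⟶ Y) → Prop
  | mk (i : ι) : OfFamily x (x i)

variable [HasColimits K]

/-- `(K, M)` is cofibrantly generated: `M` is the closure of a set of morphisms under
pushouts, transfinite compositions and retracts. -/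
def CofibrantlyGenerated (M : MorphismProperty K) : Prop :=
  ∃ (ι : Type v) (A B : ι → K) (x : ∀ i, A i ⟶ B i),
    ∀ {X Y : K} (f : X ⟶ Y), M f ↔ CofClosure (fun _ _ g => OfFamily x g) f

end Cof


/-- In a coherent cellular category, for a commutative square of morphisms of `M`
and a morphism `m : D ⟶ E` of `M`, the square `(f, g, u, v)` is cellular if and only if the
square `(f, g, u ≫ m, v ≫ m)` is cellular. -/
theorem cellularSquares_form_independence_notion
    {K : Type u} [Category.{v} K] [HasColimits K] (M : MorphismProperty K)
    [CellularCategory K M] (hcoh : Coherent M)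
    {A B C D E : K} (f : A ⟶ B) (g : A ⟶ C) (u : B ⟶ D) (v : C ⟶ D) (m : D ⟶ E)
    (hf : M f) (hg : M g) (hu : M u) (hv : M v) (hm : M m)
    (w : f ≫ u = g ≫ v) :
    IsCellularSquare M f g u v ↔ IsCellularSquare M f g (u ≫ m) (v ≫ m) := by
  have key : ∀ w' : f ≫ (u ≫ m) = g ≫ (v ≫ m),
      pushout.desc (u ≫ m) (v ≫ m) w' = pushout.desc u v w ≫ m := by
    intro w'
    apply pushout.hom_ext
    · rw [pushout.inl_desc, pushout.inl_desc_assoc]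
    · rw [pushout.inr_desc, pushout.inr_desc_assoc]
  constructor
  · rintro ⟨_, h⟩
    have w' : f ≫ (u ≫ m) = g ≫ (v ≫ m) := by
      rw [← Category.assoc, w, Category.assoc]
    refine ⟨w', ?_⟩
    rw [key w']
    exact CellularCategory.comp_mem _ _ h hm
  · rintro ⟨w', h⟩
    rw [key w'] at h
    exact ⟨w, hcoh _ _ h hm⟩

end Paper
end

section
/- Let (K,M) be a cellular category. Suppose (f, g, u1, v1) with corner D1 and (f, g, u2, v2) with corner D2 are two cellular squares over the same span f: A → B, g: A → C (f, g, u1, v1, u2, v2 all in M). Then there exist an object E and morphisms w1: D1 → E and w2: D2 → E, both in M, such that w1 ∘ u1 = w2 ∘ u2 and w1 ∘ v1 = w2 ∘ v2. (Cellular squares have the uniqueness property.) -/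
open CategoryTheory CategoryTheory.Limits

universe v u

namespace Paper

/-- In a cellular category, any two cellular squares over the same span of
morphisms of `M` can be amalgamated by morphisms of `M`. -/
theorem cellularSquares_uniqueness
    {K : Type u} [Category.{v} K] [HasColimits K] (M : MorphismProperty K)
    [CellularCategory K M]
    {A B C D₁ D₂ : K} (f : A ⟶ B) (g : A ⟶ C)
    (u₁ : B ⟶ D₁) (v₁ : C ⟶ D₁) (u₂ : B ⟶ D₂) (v₂ : C ⟶ D₂)
    (hf : M f) (hg : M g) (hu₁ : M u₁) (hv₁ : M v₁) (hu₂ : M u₂) (hv₂ : M v₂)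
    (h₁ : IsCellularSquare M f g u₁ v₁) (h₂ : IsCellularSquare M f g u₂ v₂) :
    ∃ (E : K) (w₁ : D₁ ⟶ E) (w₂ : D₂ ⟶ E),
      M w₁ ∧ M w₂ ∧ u₁ ≫ w₁ = u₂ ≫ w₂ ∧ v₁ ≫ w₁ = v₂ ≫ w₂ := by
  obtain ⟨e₁, m₁⟩ := h₁
  obtain ⟨e₂, m₂⟩ := h₂
  have sq := IsPushout.of_hasPushout (pushout.desc u₁ v₁ e₁) (pushout.desc u₂ v₂ e₂)
  refine ⟨_, pushout.inl _ _, pushout.inr _ _,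
    CellularCategory.pushout_mem _ _ _ _ sq.flip m₂,
    CellularCategory.pushout_mem _ _ _ _ sq m₁, ?_, ?_⟩
  · have h := congrArg (fun k => pushout.inl f g ≫ k) sq.w
    simpa only [pushout.inl_desc_assoc] using h
  · have h := congrArg (fun k => pushout.inr f g ≫ k) sq.w
    simpa only [pushout.inr_desc_assoc] using h

end Paper
end

section
/- Let (K,M) be a cellular category. Suppose (f, g, u, v) is a cellular square, where f: A → B, g: A → C, u: B → D, v: C → D are in M, and suppose (v, g', u', v') is a cellular square, where g': C → E, u': D → F, v': E → F are in M and u' ∘ v = v' ∘ g'. Then the horizontally composed square (f, g' ∘ g, u' ∘ u, v') is a cellular square. (Cellular squares are transitive.) -/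
open CategoryTheory CategoryTheory.Limits

universe v u

namespace Paper

/-- In a cellular category, cellular squares are transitive: the horizontal
composition of two cellular squares is a cellular square. -/
theorem cellularSquares_transitive
    {K : Type u} [Category.{v} K] [HasColimits K] (M : MorphismProperty K)
    [CellularCategory K M]
    {A B C D E F' : K} (f : A ⟶ B) (g : A ⟶ C) (u : B ⟶ D) (v : C ⟶ D)
    (g' : C ⟶ E) (u' : D ⟶ F') (v' : E ⟶ F')
    (hf : M f) (hg : M g) (hu : M u) (hv : M v) (hg' : M g') (hu' : M u') (hv' : M v')
    (h₁ : IsCellularSquare M f g u v) (h₂ : IsCellularSquare M v g' u' v') :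
    IsCellularSquare M f (g ≫ g') (u ≫ u') v' := by
  obtain ⟨w₁, m₁⟩ := h₁
  obtain ⟨w₂, m₂⟩ := h₂
  have w : f ≫ u ≫ u' = (g ≫ g') ≫ v' := by
    rw [← Category.assoc, w₁, Category.assoc, w₂, Category.assoc]
  refine ⟨w, ?_⟩
  have wa : f ≫ pushout.inl f (g ≫ g') = g ≫ g' ≫ pushout.inr f (g ≫ g') := by
    rw [pushout.condition, Category.assoc]
  have wb : f ≫ u ≫ pushout.inl v g' = (g ≫ g') ≫ pushout.inr v g' := by
    rw [← Category.assoc, w₁, Category.assoc, pushout.condition, Category.assoc]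
  let a : pushout f g ⟶ pushout f (g ≫ g') := pushout.desc _ _ wa
  let b : pushout f (g ≫ g') ⟶ pushout v g' := pushout.desc _ _ wb
  have sq₁ : IsPushout (pushout.inr f g) g' a (pushout.inr f (g ≫ g')) := by
    refine IsPushout.of_top (h₁₁ := f) (v₁₁ := g) (v₁₂ := pushout.inl f g) ?_ ?_
      (IsPushout.of_hasPushout f g)
    · have h : pushout.inl f g ≫ a = pushout.inl f (g ≫ g') := pushout.inl_desc _ _ _
      rw [h]
      exact IsPushout.of_hasPushout f (g ≫ g')
    · exact pushout.inr_desc _ _ _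
  have sq₂ : IsPushout (pushout.desc u v w₁) a (pushout.inl v g') b := by
    refine IsPushout.of_left (h₁₁ := pushout.inr f g) (v₁₁ := g')
      (h₂₁ := pushout.inr f (g ≫ g')) ?_ ?_ sq₁
    · have h : pushout.inr f (g ≫ g') ≫ b = pushout.inr v g' := pushout.inr_desc _ _ _
      rw [h, pushout.inr_desc]
      exact IsPushout.of_hasPushout v g'
    · apply pushout.hom_ext
      · rw [pushout.inl_desc_assoc, pushout.inl_desc_assoc, pushout.inl_desc]
      · rw [pushout.inr_desc_assoc, pushout.inr_desc_assoc, Category.assoc, pushout.inr_desc,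
          pushout.condition]
  have mb : M b := CellularCategory.pushout_mem _ _ _ _ sq₂ m₁
  have e : pushout.desc (u ≫ u') v' w = b ≫ pushout.desc u' v' w₂ := by
    apply pushout.hom_ext
    · rw [pushout.inl_desc_assoc, Category.assoc, pushout.inl_desc, pushout.inl_desc]
    · rw [pushout.inr_desc_assoc, pushout.inr_desc, pushout.inr_desc]
  rw [e]
  exact CellularCategory.comp_mem _ _ mb m₂

end Paper
end

section
/- Let λ be a regular cardinal and let (K,M) be a λ-continuous cellular category. Let I be a λ-directed poset and let D: I → K² be a diagram in the arrow category of K such that every object D i is a morphism f_i: A_i → B_i in M and every transition morphism D(i ≤ j) is a cellular square (all of whose four morphisms lie in M). Let f: A → B be the colimit of D in K². Then f belongs to M, and for every i ∈ I the colimit coprojection square from f_i to f is a cellular square; moreover, f together with these coprojections is the colimit of D in the category K_{M,↓} whose objects are the morphisms in M and whose morphisms are cellular squares. (The independence relation given by cellular squares is λ-continuous.) -/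
open CategoryTheory CategoryTheory.Limits

universe v u

namespace Paper

section Helper

variable {K : Type u} [Category.{v} K] [HasColimits K]

/-- The transition maps of pushouts `X ⊔_{A_i} B_i` for a cocone `α : A_i ⟶ X`. -/
noncomputable def poMap {I : Type v} [Preorder I] (D : I ⥤ Arrow K) {X : K}
    (α : ∀ i, (D.obj i).left ⟶ X)
    (hα : ∀ (i j : I) (h : i ⟶ j), (D.map h).left ≫ α j = α i) {i j : I} (h : i ⟶ j) :
    pushout (α i) (D.obj i).hom ⟶ pushout (α j) (D.obj j).hom :=
  pushout.desc (pushout.inl _ _) ((D.map h).right ≫ pushout.inr _ _) (by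
    have e : (D.map h).left ≫ (D.obj j).hom = (D.obj i).hom ≫ (D.map h).right := (D.map h).w
    rw [← hα i j h, Category.assoc, pushout.condition, ← Category.assoc, ← Category.assoc, e])

lemma poInl_poMap {I : Type v} [Preorder I] (D : I ⥤ Arrow K) {X : K}
    (α : ∀ i, (D.obj i).left ⟶ X)
    (hα : ∀ (i j : I) (h : i ⟶ j), (D.map h).left ≫ α j = α i) {i j : I} (h : i ⟶ j) :
    pushout.inl (α i) (D.obj i).hom ≫ poMap D α hα h = pushout.inl (α j) (D.obj j).hom :=
  pushout.inl_desc _ _ _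

lemma poInr_poMap {I : Type v} [Preorder I] (D : I ⥤ Arrow K) {X : K}
    (α : ∀ i, (D.obj i).left ⟶ X)
    (hα : ∀ (i j : I) (h : i ⟶ j), (D.map h).left ≫ α j = α i) {i j : I} (h : i ⟶ j) :
    pushout.inr (α i) (D.obj i).hom ≫ poMap D α hα h =
      (D.map h).right ≫ pushout.inr (α j) (D.obj j).hom :=
  pushout.inr_desc _ _ _

/-- The diagram of pushouts `X ⊔_{A_i} B_i` for a cocone `α : A_i ⟶ X`. -/
noncomputable def poFunctor {I : Type v} [Preorder I] (D : I ⥤ Arrow K) {X : K}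
    (α : ∀ i, (D.obj i).left ⟶ X)
    (hα : ∀ (i j : I) (h : i ⟶ j), (D.map h).left ≫ α j = α i) : I ⥤ K where
  obj i := pushout (α i) (D.obj i).hom
  map {i j} h := poMap D α hα h
  map_id i := by
    change poMap D α hα (𝟙 i) = 𝟙 (pushout (α i) (D.obj i).hom)
    apply pushout.hom_ext <;> simp [poMap]
  map_comp {i j k} h h' := by
    change poMap D α hα (h ≫ h') = poMap D α hα h ≫ poMap D α hα h'
    apply pushout.hom_ext
    · rw [← Category.assoc, poInl_poMap, poInl_poMap, poInl_poMap]
    · rw [← Category.assoc, poInr_poMap, poInr_poMap, Category.assoc, poInr_poMap, D.map_comp]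
      exact Category.assoc _ _ _

section
variable {I : Type v} [Preorder I] (D : I ⥤ Arrow K) {X : K}
    (α : ∀ i, (D.obj i).left ⟶ X)
    (hα : ∀ (i j : I) (h : i ⟶ j), (D.map h).left ≫ α j = α i)

/-- left coprojection -/
noncomputable def poInl (i : I) : X ⟶ (poFunctor D α hα).obj i := pushout.inl (α i) (D.obj i).hom

/-- right coprojection -/
noncomputable def poInr (i : I) : (D.obj i).right ⟶ (poFunctor D α hα).obj i :=
  pushout.inr (α i) (D.obj i).hom

lemma po_isPushout (i : I) :
    IsPushout (α i) (D.obj i).hom (poInl D α hα i) (poInr D α hα i) :=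
  IsPushout.of_hasPushout _ _

lemma poInl_map {i j : I} (h : i ⟶ j) :
    poInl D α hα i ≫ (poFunctor D α hα).map h = poInl D α hα j :=
  pushout.inl_desc _ _ _

lemma poInr_map {i j : I} (h : i ⟶ j) :
    poInr D α hα i ≫ (poFunctor D α hα).map h = (D.map h).right ≫ poInr D α hα j :=
  pushout.inr_desc _ _ _

/-- descent out of the pushout -/
noncomputable def poDesc {B : K} (i : I) (g : X ⟶ B) (b : (D.obj i).right ⟶ B)
    (w : α i ≫ g = (D.obj i).hom ≫ b) : (poFunctor D α hα).obj i ⟶ B :=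
  pushout.desc g b w

lemma poInl_desc {B : K} (i : I) (g : X ⟶ B) (b : (D.obj i).right ⟶ B)
    (w : α i ≫ g = (D.obj i).hom ≫ b) :
    poInl D α hα i ≫ poDesc D α hα i g b w = g := pushout.inl_desc _ _ _

lemma poInr_desc {B : K} (i : I) (g : X ⟶ B) (b : (D.obj i).right ⟶ B)
    (w : α i ≫ g = (D.obj i).hom ≫ b) :
    poInr D α hα i ≫ poDesc D α hα i g b w = b := pushout.inr_desc _ _ _

end

lemma poFunctor_map_mem (M : MorphismProperty K) [CellularCategory K M]
    {I : Type v} [Preorder I] (D : I ⥤ Arrow K) {X : K}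
    (α : ∀ i, (D.obj i).left ⟶ X)
    (hα : ∀ (i j : I) (h : i ⟶ j), (D.map h).left ≫ α j = α i)
    (hmap : ∀ (i j : I) (h : i ⟶ j), CellularHom M (D.map h)) (i j : I) (h : i ⟶ j) :
    M ((poFunctor D α hα).map h) := by
  obtain ⟨-, -, w, hM⟩ := hmap i j h
  have t : IsPushout (D.map h).left (D.obj i).hom (pushout.inl _ _) (pushout.inr _ _) :=
    IsPushout.of_hasPushout _ _
  have s : IsPushout ((D.map h).left ≫ α j) (D.obj i).hom
      (poInl D α hα i) (poInr D α hα i) := by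
    rw [hα i j h]; exact po_isPushout D α hα i
  have r := IsPushout.of_left' s t
  have big : IsPushout (α j) (pushout.inl _ _ ≫ pushout.desc (D.obj j).hom (D.map h).right w)
      (poInl D α hα i ≫ (poFunctor D α hα).map h)
      (poInr D α hα j) := by
    rw [poInl_map, pushout.inl_desc]
    exact po_isPushout D α hα j
  have fin := IsPushout.of_top big (by
    apply t.hom_ext
    · rw [t.inl_desc_assoc, pushout.inl_desc_assoc, Category.assoc, poInl_map,
        (po_isPushout D α hα j).w]
    · rw [t.inr_desc_assoc, pushout.inr_desc_assoc, poInr_map]) r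
  exact CellularCategory.pushout_mem _ _ _ _ fin.flip hM

/-- The cocone over the diagram of pushouts. -/
noncomputable def poCocone {I : Type v} [Preorder I] (D : I ⥤ Arrow K) {X : K}
    (α : ∀ i, (D.obj i).left ⟶ X)
    (hα : ∀ (i j : I) (h : i ⟶ j), (D.map h).left ≫ α j = α i)
    {B : K} (β : ∀ i, (D.obj i).right ⟶ B)
    (hβ : ∀ (i j : I) (h : i ⟶ j), (D.map h).right ≫ β j = β i)
    (g : X ⟶ B) (w : ∀ i, α i ≫ g = (D.obj i).hom ≫ β i) :
    Cocone (poFunctor D α hα) where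
  pt := B
  ι :=
    { app := fun i => poDesc D α hα i g (β i) (w i)
      naturality := fun i j h => by
        change (poFunctor D α hα).map h ≫ poDesc D α hα j g (β j) (w j) =
          poDesc D α hα i g (β i) (w i) ≫ 𝟙 B
        rw [Category.comp_id]
        apply (po_isPushout D α hα i).hom_ext
        · rw [← Category.assoc, poInl_map, poInl_desc, poInl_desc]
        · rw [← Category.assoc, poInr_map, Category.assoc, poInr_desc, poInr_desc, hβ] }

lemma poCocone_isColimit
    {I : Type v} [Preorder I] [Nonempty I] (hdir : ∀ i j : I, ∃ k, i ≤ k ∧ j ≤ k)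
    (D : I ⥤ Arrow K) {X : K}
    (α : ∀ i, (D.obj i).left ⟶ X)
    (hα : ∀ (i j : I) (h : i ⟶ j), (D.map h).left ≫ α j = α i)
    (c : Cocone D) (hA : IsColimit (Arrow.leftFunc.mapCocone c))
    (hB : IsColimit (Arrow.rightFunc.mapCocone c))
    (m : c.pt.left ⟶ X) (hm : ∀ i, (c.ι.app i).left ≫ m = α i)
    {P : K} (u : X ⟶ P) (w : c.pt.right ⟶ P) (po : IsPushout m c.pt.hom u w)
    (β : ∀ i, (D.obj i).right ⟶ P)
    (hβ : ∀ (i j : I) (h : i ⟶ j), (D.map h).right ≫ β j = β i)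
    (hw : ∀ i, α i ≫ u = (D.obj i).hom ≫ β i)
    (hβw : ∀ i, (c.ι.app i).right ≫ w = β i) :
    Nonempty (IsColimit (poCocone D α hα β hβ u hw)) := by
  have hA' : ∀ {Z : K} (f g : c.pt.left ⟶ Z),
      (∀ i, (c.ι.app i).left ≫ f = (c.ι.app i).left ≫ g) → f = g :=
    fun f g h => hA.hom_ext h
  have hB' : ∀ {Z : K} (f g : c.pt.right ⟶ Z),
      (∀ i, (c.ι.app i).right ≫ f = (c.ι.app i).right ≫ g) → f = g :=
    fun f g h => hB.hom_ext h
  obtain ⟨i₀⟩ := ‹Nonempty I›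
  have key : ∀ (S : K) (σ : ∀ i, (poFunctor D α hα).obj i ⟶ S)
      (_ : ∀ (i j : I) (h : i ⟶ j), (poFunctor D α hα).map h ≫ σ j = σ i), ∃ d : P ⟶ S,
      ∀ i, poDesc D α hα i u (β i) (hw i) ≫ d = σ i := by
    intro S σ hs
    have step : ∀ (i j : I) (h : i ⟶ j), poInl D α hα i ≫ σ i = poInl D α hα j ≫ σ j := by
      intro i j h
      rw [← hs i j h, ← Category.assoc, poInl_map]
    have ind : ∀ i, poInl D α hα i ≫ σ i = poInl D α hα i₀ ≫ σ i₀ := by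
      intro i
      obtain ⟨k, h1, h2⟩ := hdir i i₀
      rw [step i k (homOfLE h1), step i₀ k (homOfLE h2)]
    let sB : Cocone (D ⋙ Arrow.rightFunc) :=
      { pt := S
        ι :=
          { app := fun i => poInr D α hα i ≫ σ i
            naturality := fun i j h => by
              change (D.map h).right ≫ poInr D α hα j ≫ σ j = (poInr D α hα i ≫ σ i) ≫ 𝟙 S
              rw [Category.comp_id, ← hs i j h, ← Category.assoc, ← Category.assoc,
                poInr_map] } }
    let dB : c.pt.right ⟶ S := hB.desc sB
    have hdB : ∀ i, (c.ι.app i).right ≫ dB = poInr D α hα i ≫ σ i :=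
      fun i => hB.fac sB i
    have comm : m ≫ (poInl D α hα i₀ ≫ σ i₀) = c.pt.hom ≫ dB := by
      apply hA'
      intro i
      have e : (c.ι.app i).left ≫ c.pt.hom = (D.obj i).hom ≫ (c.ι.app i).right :=
        (c.ι.app i).w
      calc (c.ι.app i).left ≫ m ≫ (poInl D α hα i₀ ≫ σ i₀)
          = ((c.ι.app i).left ≫ m) ≫ poInl D α hα i ≫ σ i := by
            rw [← ind i]; exact (Category.assoc _ _ _).symm
        _ = (α i ≫ poInl D α hα i) ≫ σ i := by rw [hm, Category.assoc]
        _ = (D.obj i).hom ≫ (c.ι.app i).right ≫ dB := by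
            rw [(po_isPushout D α hα i).w, hdB, Category.assoc]
        _ = ((c.ι.app i).left ≫ c.pt.hom) ≫ dB := by
            rw [e]; exact (Category.assoc _ _ _).symm
        _ = (c.ι.app i).left ≫ c.pt.hom ≫ dB := Category.assoc _ _ _
    refine ⟨po.desc _ dB comm, fun i => ?_⟩
    apply (po_isPushout D α hα i).hom_ext
    · rw [← Category.assoc, poInl_desc, po.inl_desc, ind i]
    · rw [← Category.assoc, poInr_desc, ← hdB, ← hβw]
      exact (Category.assoc _ _ _).trans (congrArg _ (po.inr_desc _ _ _))
  have uniq : ∀ (S : K) (d d' : P ⟶ S), (∀ i, poDesc D α hα i u (β i) (hw i) ≫ d =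
      poDesc D α hα i u (β i) (hw i) ≫ d') → d = d' := by
    intro S d d' h
    apply po.hom_ext
    · have := congrArg (fun t => poInl D α hα i₀ ≫ t) (h i₀)
      simpa only [← Category.assoc, poInl_desc] using this
    · apply hB'
      intro i
      have := congrArg (fun t => poInr D α hα i ≫ t) (h i)
      simp only [← Category.assoc, poInr_desc] at this
      rw [← hβw] at this
      exact (Category.assoc _ _ _).symm.trans (this.trans (Category.assoc _ _ _))
  have key' : ∀ s : Cocone (poFunctor D α hα), ∃ d : P ⟶ s.pt,
      ∀ i, poDesc D α hα i u (β i) (hw i) ≫ d = s.ι.app i :=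
    fun s => key s.pt (fun i => s.ι.app i) (fun i j h => s.w h)
  exact ⟨{ desc := fun s => (key' s).choose, fac := fun s => (key' s).choose_spec,
           uniq := fun s d hd => uniq _ _ _ fun i =>
            (hd i).trans ((key' s).choose_spec i).symm }⟩

end Helper

/-- If `(K, M)` is a `λ`-continuous cellular category, then the independence
relation given by cellular squares is `λ`-continuous: for every `λ`-directed diagram in the
category `K_{M,↓}` (objects: morphisms of `M`; morphisms: cellular squares), its colimit
`f : A ⟶ B` in the arrow category lies in `M`, the colimit coprojection squares are cellular,
and the cocone is a colimit in `K_{M,↓}` (mediating morphisms to cellular cocones are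
cellular squares). -/
theorem cellularSquares_continuous
    {K : Type u} [Category.{v} K] [HasColimits K] (M : MorphismProperty K)
    [CellularCategory K M]
    (κ : Cardinal.{v}) (hκ : κ.IsRegular) (hcont : MContinuous M κ)
    (I : Preord.{v}) (hI : IsCardinalDirected κ I)
    (D : I ⥤ Arrow K) (hobj : ∀ i, M (D.obj i).hom)
    (hmap : ∀ (i j : I) (h : i ⟶ j), CellularHom M (D.map h))
    (c : Cocone D) (hc : IsColimit c) :
    M c.pt.hom ∧ (∀ i, CellularHom M (c.ι.app i)) ∧
      ∀ c' : Cocone D, M c'.pt.hom → (∀ i, CellularHom M (c'.ι.app i)) →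
        CellularHom M (hc.desc c') := by
  have hne : Nonempty I := by
    obtain ⟨j, -⟩ := hI ∅ (by simpa using hκ.pos)
    exact ⟨j⟩
  have hdir : ∀ i j : I, ∃ k, i ≤ k ∧ j ≤ k := by
    intro i j
    obtain ⟨k, hk⟩ := hI {i, j}
      (lt_of_lt_of_le (Set.Finite.lt_aleph0 (Set.toFinite _)) hκ.aleph0_le)
    exact ⟨k, hk i (by simp), hk j (by simp)⟩
  have hA : IsColimit (Arrow.leftFunc.mapCocone c) := isColimitOfPreserves _ hc
  have hB : IsColimit (Arrow.rightFunc.mapCocone c) := isColimitOfPreserves _ hc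
  have nl : ∀ (c' : Cocone D) (i j : I) (h : i ⟶ j),
      (D.map h).left ≫ (c'.ι.app j).left = (c'.ι.app i).left := fun c' i j h => by
    rw [← c'.w h]; rfl
  have nr : ∀ (c' : Cocone D) (i j : I) (h : i ⟶ j),
      (D.map h).right ≫ (c'.ι.app j).right = (c'.ι.app i).right := fun c' i j h => by
    rw [← c'.w h]; rfl
  have sq : ∀ (c' : Cocone D) (i : I),
      (c'.ι.app i).left ≫ c'.pt.hom = (D.obj i).hom ≫ (c'.ι.app i).right :=
    fun c' i => (c'.ι.app i).w
  obtain ⟨-, hAM, hAu⟩ := hcont I hI _ ⟨fun _ => trivial, fun i j h => (hmap i j h).1⟩ _ hA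
  obtain ⟨-, hBM, hBu⟩ := hcont I hI _ ⟨fun _ => trivial, fun i j h => (hmap i j h).2.1⟩ _ hB
  obtain ⟨hlim⟩ := poCocone_isColimit hdir D (fun i => (c.ι.app i).left) (nl c) c hA hB
    (𝟙 _) (fun i => Category.comp_id _) c.pt.hom (𝟙 _) IsPushout.of_id_fst
    (fun i => (c.ι.app i).right) (nr c) (sq c) (fun i => Category.comp_id _)
  obtain ⟨-, hPM, -⟩ := hcont I hI _ ⟨fun _ => trivial,
    poFunctor_map_mem M D _ (nl c) hmap⟩ _ hlim
  have hcell : ∀ i, CellularHom M (c.ι.app i) := fun i => ⟨hAM i, hBM i, sq c i, hPM i⟩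
  refine ⟨?_, hcell, ?_⟩
  · obtain ⟨i⟩ := hne
    have h1 : M (pushout.inl (c.ι.app i).left (D.obj i).hom) :=
      CellularCategory.pushout_mem _ _ _ _ (IsPushout.of_hasPushout _ _).flip (hobj i)
    have h2 := CellularCategory.comp_mem _ _ h1 (hPM i)
    have e : pushout.inl (c.ι.app i).left (D.obj i).hom ≫
        pushout.desc c.pt.hom (c.ι.app i).right (sq c i) = c.pt.hom := pushout.inl_desc _ _ _
    rw [← e]
    exact h2
  · intro c' hc' hcell'
    have fl : ∀ i, (c.ι.app i).left ≫ (hc.desc c').left = (c'.ι.app i).left := fun i => by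
      rw [← hc.fac c' i]; rfl
    have fr : ∀ i, (c.ι.app i).right ≫ (hc.desc c').right = (c'.ι.app i).right := fun i => by
      rw [← hc.fac c' i]; rfl
    have sq' : (hc.desc c').left ≫ c'.pt.hom = c.pt.hom ≫ (hc.desc c').right :=
      (hc.desc c').w
    refine ⟨?_, ?_, sq', ?_⟩
    · obtain ⟨m, hm, hf, -⟩ := hAu (Arrow.leftFunc.mapCocone c') trivial
        (fun i => (hcell' i).1)
      have : (hc.desc c').left = m := hA.hom_ext fun i => (fl i).trans (hf i).symm
      rw [this]; exact hm
    · obtain ⟨m, hm, hf, -⟩ := hBu (Arrow.rightFunc.mapCocone c') trivial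
        (fun i => (hcell' i).2.1)
      have : (hc.desc c').right = m := hB.hom_ext fun i => (fr i).trans (hf i).symm
      rw [this]; exact hm
    · have po := IsPushout.of_hasPushout (hc.desc c').left c.pt.hom
      obtain ⟨hlim'⟩ := poCocone_isColimit hdir D (fun i => (c'.ι.app i).left) (nl c') c hA hB
        (hc.desc c').left fl (pushout.inl _ _) (pushout.inr _ _) po
        (fun i => (c.ι.app i).right ≫ pushout.inr _ _)
        (fun i j h => by rw [← Category.assoc, nr c i j h])
        (fun i => by
          rw [← fl i, Category.assoc, pushout.condition, ← Category.assoc, sq c i,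
            Category.assoc])
        (fun i => rfl)
      obtain ⟨-, -, hu⟩ := hcont I hI _ ⟨fun _ => trivial,
        poFunctor_map_mem M D _ (nl c') hmap⟩ _ hlim'
      have hleg : ∀ i, M ((poCocone D _ (nl c') (fun i => (c'.ι.app i).right) (nr c')
        c'.pt.hom (sq c')).ι.app i) := fun i => (hcell' i).2.2.2
      obtain ⟨m, hm, hf, -⟩ := hu (poCocone D _ (nl c') (fun i => (c'.ι.app i).right) (nr c')
        c'.pt.hom (sq c')) trivial hleg
      have : pushout.desc c'.pt.hom (hc.desc c').right sq' = m := by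
        refine hlim'.hom_ext fun i => Eq.trans ?_ (hf i).symm
        apply (po_isPushout D _ (nl c') i).hom_ext
        · refine (Category.assoc _ _ _).symm.trans ?_
          refine (congrArg (· ≫ _) (poInl_desc D _ (nl c') i _ _ _)).trans ?_
          exact (pushout.inl_desc _ _ _).trans (poInl_desc D _ (nl c') i _ _ _).symm
        · refine (Category.assoc _ _ _).symm.trans ?_
          refine (congrArg (· ≫ _) (poInr_desc D _ (nl c') i _ _ _)).trans ?_
          refine Eq.trans ?_ (poInr_desc D _ (nl c') i _ _ _).symm
          refine (Category.assoc _ _ _).trans ?_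
          exact (congrArg (_ ≫ ·) (pushout.inr_desc _ _ _)).trans (fr i)
      rw [this]; exact hm

end Paper
end

section
/- Let K be a category and let ⌣¹ and ⌣² be independence notions on K such that every ⌣¹-independent square is ⌣²-independent, ⌣¹ has existence, and ⌣² has uniqueness. Then ⌣¹ = ⌣², i.e., a commutative square is ⌣¹-independent if and only if it is ⌣²-independent. -/
open CategoryTheory CategoryTheory.Limits

universe v u

namespace Paper

/-- An independence notion on a category `K`: a class of commutative squares such that,
for a commutative square `(f, g, u, v)` and a morphism `m`, the square `(f, g, u, v)` is
independent if and only if `(f, g, u ≫ m, v ≫ m)` is independent. -/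
structure IndepNotion (K : Type u) [Category.{v} K] where
  /-- the class of independent squares `(f, g, u, v)` with `f ≫ u = g ≫ v` -/
  Indep : ∀ ⦃A B C D : K⦄, (A ⟶ B) → (A ⟶ C) → (B ⟶ D) → (C ⟶ D) → Prop
  comm_of_indep : ∀ ⦃A B C D : K⦄ ⦃f : A ⟶ B⦄ ⦃g : A ⟶ C⦄ ⦃u : B ⟶ D⦄ ⦃v : C ⟶ D⦄,
    Indep f g u v → f ≫ u = g ≫ v
  indep_iff_comp : ∀ ⦃A B C D E : K⦄ (f : A ⟶ B) (g : A ⟶ C) (u : B ⟶ D) (v : C ⟶ D)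
    (m : D ⟶ E), f ≫ u = g ≫ v → (Indep f g u v ↔ Indep f g (u ≫ m) (v ≫ m))

namespace IndepNotion

variable {K : Type u} [Category.{v} K] (R : IndepNotion K)

/-- Existence: every span can be completed to an independent square. -/
def HasExistence : Prop :=
  ∀ {A B C : K} (f : A ⟶ B) (g : A ⟶ C),
    ∃ (D : K) (u : B ⟶ D) (v : C ⟶ D), R.Indep f g u v

/-- Uniqueness: any two independent squares over the same span can be amalgamated. -/
def HasUniqueness : Prop :=
  ∀ {A B C D₁ D₂ : K} (f : A ⟶ B) (g : A ⟶ C)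
    (u₁ : B ⟶ D₁) (v₁ : C ⟶ D₁) (u₂ : B ⟶ D₂) (v₂ : C ⟶ D₂),
    R.Indep f g u₁ v₁ → R.Indep f g u₂ v₂ →
    ∃ (E : K) (w₁ : D₁ ⟶ E) (w₂ : D₂ ⟶ E),
      u₁ ≫ w₁ = u₂ ≫ w₂ ∧ v₁ ≫ w₁ = v₂ ≫ w₂

/-- Transitivity of independent squares. -/
def IsTransitive : Prop :=
  ∀ {A B C D E F : K} (f : A ⟶ B) (g : A ⟶ C) (u : B ⟶ D) (v : C ⟶ D)
    (g' : C ⟶ E) (u' : D ⟶ F) (v' : E ⟶ F),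
    R.Indep f g u v → R.Indep v g' u' v' → R.Indep f (g ≫ g') (u ≫ u') v'

/-- Symmetry of independent squares. -/
def IsSymmetric : Prop :=
  ∀ {A B C D : K} (f : A ⟶ B) (g : A ⟶ C) (u : B ⟶ D) (v : C ⟶ D),
    R.Indep f g u v ↔ R.Indep g f v u

/-- Right monotonicity. -/
def IsRightMonotonic : Prop :=
  ∀ {A B C' C D : K} (f : A ⟶ B) (g' : A ⟶ C') (c : C' ⟶ C) (u : B ⟶ D) (v : C ⟶ D),
    R.Indep f (g' ≫ c) u v → R.Indep f g' u (c ≫ v)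

/-- Left monotonicity. -/
def IsLeftMonotonic : Prop :=
  ∀ {A B' B C D : K} (f' : A ⟶ B') (b : B' ⟶ B) (g : A ⟶ C) (u : B ⟶ D) (v : C ⟶ D),
    R.Indep (f' ≫ b) g u v → R.Indep f' g (b ≫ u) v

/-- A morphism of the arrow category of `K` is an independent square. -/
def arrowHom : ∀ ⦃X Y : Arrow K⦄, (X ⟶ Y) → Prop :=
  fun X Y sq => R.Indep sq.left X.hom Y.hom sq.right

/-- `R` is accessible: the category `K_↓` (objects: morphisms of `K`; morphisms: independent
squares) is an accessible category, closed under `κ`-directed colimits in the arrow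
category, for some regular cardinal `κ`. -/
def IsAccessible : Prop :=
  ∃ κ : Cardinal.{v}, κ.IsRegular ∧
    SubAccessible (fun _ : Arrow K => True) R.arrowHom κ ∧
    SubClosed (fun _ : Arrow K => True) R.arrowHom κ

end IndepNotion

/-- `K` has chain bounds: every chain indexed by a well-ordered set admits a cocone. -/
def HasChainBounds (K : Type u) [Category.{v} K] : Prop :=
  ∀ (J : Type v) (_ : LinearOrder J) (_ : WellFoundedLT J) (F : J ⥤ K), Nonempty (Cocone F)

/-- `K` has `κ`-directed colimits for arbitrarily large regular cardinals `κ`. -/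
def HasArbitrarilyLargeDirectedColimits (K : Type u) [Category.{v} K] : Prop :=
  ∀ κ : Cardinal.{v}, ∃ κ' : Cardinal.{v}, κ ≤ κ' ∧ κ'.IsRegular ∧
    ∀ I : Preord.{v}, IsCardinalDirected κ' I → ∀ F : I ⥤ K, HasColimit F


/-- If every `⌣¹`-independent square is `⌣²`-independent, `⌣¹` has existence
and `⌣²` has uniqueness, then `⌣¹ = ⌣²`. -/
theorem indep_eq_of_subset_of_existence_of_uniqueness
    {K : Type u} [Category.{v} K] (R₁ R₂ : IndepNotion K)
    (hsub : ∀ {A B C D : K} (f : A ⟶ B) (g : A ⟶ C) (u : B ⟶ D) (v : C ⟶ D),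
      R₁.Indep f g u v → R₂.Indep f g u v)
    (hex : R₁.HasExistence) (huniq : R₂.HasUniqueness) :
    ∀ {A B C D : K} (f : A ⟶ B) (g : A ⟶ C) (u : B ⟶ D) (v : C ⟶ D),
      R₁.Indep f g u v ↔ R₂.Indep f g u v := by
  intro A B C D f g u v
  refine ⟨hsub f g u v, fun h => ?_⟩
  obtain ⟨D', u', v', h'⟩ := hex f g
  obtain ⟨E, w₁, w₂, hu, hv⟩ := huniq f g u v u' v' h (hsub f g u' v' h')
  rw [R₁.indep_iff_comp f g u v w₁ (R₂.comm_of_indep h), hu, hv]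
  exact (R₁.indep_iff_comp f g u' v' w₂ (R₁.comm_of_indep h')).1 h'

end Paper
end

section
/- Let R be a ring, N an R-module, and let f: A → B and g: B → C be injective R-linear maps such that Ext^i_R(coker f, N) = 0 and Ext^i_R(coker g, N) = 0 for all i ≥ 1. Then Ext^i_R(coker (g ∘ f), N) = 0 for all i ≥ 1. (The class of monomorphisms whose cokernel lies in the Ext-orthogonality class of N is closed under composition.) -/
open CategoryTheory

universe u

namespace Paper

/-- `Ext^i_R(X, N) = 0` for all `i ≥ 1`, where `Ext` denotes the right derived functors of
`Hom` computed in the abelian category of `R`-modules. -/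
def ExtVanishes (R : Type u) [Ring R] (X N : Type u)
    [AddCommGroup X] [Module R X] [AddCommGroup N] [Module R N] : Prop :=
  ∀ i : ℕ, 1 ≤ i →
    Limits.IsZero (((Ext ℤ (ModuleCat.{u} R) i).obj
      (Opposite.op (ModuleCat.of R X))).obj (ModuleCat.of R N))

lemma isZero_Ext_iff {R : Type u} [Ring R] (X Y : ModuleCat.{u} R) (n : ℕ) :
    Limits.IsZero (((Ext ℤ (ModuleCat.{u} R) (n + 1)).obj (Opposite.op X)).obj Y) ↔
      Subsingleton (Abelian.Ext.{u} X Y (n + 1)) := by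
  obtain ⟨P⟩ := HasProjectiveResolution.out (Z := X)
  have key : Limits.IsZero (((Ext ℤ (ModuleCat.{u} R) (n + 1)).obj (Opposite.op X)).obj Y) ↔
      ∀ f : P.complex.X (n + 1) ⟶ Y, P.complex.d (n + 2) (n + 1) ≫ f = 0 →
        ∃ g : P.complex.X n ⟶ Y, P.complex.d (n + 1) n ≫ g = f := by
    rw [(P.isoExt (R := ℤ) (n + 1) Y).isZero_iff,
      ← HomologicalComplex.exactAt_iff_isZero_homology,
      HomologicalComplex.exactAt_iff' _ n (n + 1) (n + 2) (by simp) (by simp),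
      ShortComplex.moduleCat_exact_iff]
    rfl
  rw [key]
  constructor
  · intro h
    refine subsingleton_of_forall_eq 0 fun α => ?_
    obtain ⟨f, hf, rfl⟩ := P.extMk_surjective α (n + 2) rfl
    exact (P.extMk_eq_zero_iff f (n + 2) rfl hf n rfl).2 (h f hf)
  · intro h f hf
    exact (P.extMk_eq_zero_iff f (n + 2) rfl hf n rfl).1 (Subsingleton.elim _ _)

/-- The class of monomorphisms whose cokernel lies in the Ext-orthogonality
class of `N` is closed under composition. -/
theorem extVanishes_cokernel_comp
    {R : Type u} [Ring R] (N : Type u) [AddCommGroup N] [Module R N]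
    {A B C : Type u} [AddCommGroup A] [Module R A] [AddCommGroup B] [Module R B]
    [AddCommGroup C] [Module R C]
    (f : A →ₗ[R] B) (g : B →ₗ[R] C)
    (hf : Function.Injective f) (hg : Function.Injective g)
    (hfE : ExtVanishes R (B ⧸ LinearMap.range f) N)
    (hgE : ExtVanishes R (C ⧸ LinearMap.range g) N) :
    ExtVanishes R (C ⧸ LinearMap.range (g ∘ₗ f)) N := by
  intro i hi
  obtain ⟨n, rfl⟩ : ∃ n, i = n + 1 := ⟨i - 1, by omega⟩
  have h1 := (isZero_Ext_iff _ _ n).1 (hfE (n + 1) hi)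
  have h3 := (isZero_Ext_iff _ _ n).1 (hgE (n + 1) hi)
  rw [isZero_Ext_iff]
  have hle : LinearMap.range (g ∘ₗ f) ≤ LinearMap.range g := LinearMap.range_comp_le_range f g
  have hle' : LinearMap.range f ≤ (LinearMap.range (g ∘ₗ f)).comap g := by
    rintro _ ⟨a, rfl⟩
    exact ⟨a, rfl⟩
  let φ : (B ⧸ LinearMap.range f) →ₗ[R] (C ⧸ LinearMap.range (g ∘ₗ f)) :=
    Submodule.mapQ _ _ g hle'
  let ψ : (C ⧸ LinearMap.range (g ∘ₗ f)) →ₗ[R] (C ⧸ LinearMap.range g) :=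
    Submodule.factor hle
  have hφ : Function.Injective φ := by
    rw [injective_iff_map_eq_zero]
    intro x hx
    obtain ⟨b, rfl⟩ := Submodule.Quotient.mk_surjective _ x
    obtain ⟨a, ha⟩ := (Submodule.Quotient.mk_eq_zero _).1 hx
    exact (Submodule.Quotient.mk_eq_zero _).2 ⟨a, hg ha⟩
  have hψ : Function.Surjective ψ := by
    intro x
    obtain ⟨c, rfl⟩ := Submodule.Quotient.mk_surjective _ x
    exact ⟨Submodule.Quotient.mk c, rfl⟩
  have hex : Function.Exact φ ψ := by
    intro x
    constructor
    · intro hx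
      obtain ⟨c, rfl⟩ := Submodule.Quotient.mk_surjective _ x
      obtain ⟨b, rfl⟩ := (Submodule.Quotient.mk_eq_zero _).1 hx
      exact ⟨Submodule.Quotient.mk b, rfl⟩
    · rintro ⟨y, rfl⟩
      obtain ⟨b, rfl⟩ := Submodule.Quotient.mk_surjective _ y
      exact (Submodule.Quotient.mk_eq_zero _).2 ⟨b, rfl⟩
  let S : ShortComplex (ModuleCat.{u} R) :=
    ShortComplex.mk (ModuleCat.ofHom φ) (ModuleCat.ofHom ψ) (by
      rw [← ModuleCat.ofHom_comp, hex.linearMap_comp_eq_zero]; rfl)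
  have hS : S.ShortExact :=
    { exact := (ShortComplex.ShortExact.moduleCat_exact_iff_function_exact S).2 hex
      mono_f := (ModuleCat.mono_iff_injective _).2 hφ
      epi_g := (ModuleCat.epi_iff_surjective _).2 hψ }
  refine subsingleton_of_forall_eq 0 fun α => ?_
  obtain ⟨β, hβ⟩ := Abelian.Ext.contravariant_sequence_exact₂ hS (ModuleCat.of R N) α
    (h1.elim _ _)
  rw [← hβ, show β = 0 from h3.elim _ _, Abelian.Ext.comp_zero]

end Paper
end

section
/- Let R be a ring, N an R-module, f: A → B an R-linear map, and g: B → C an injective R-linear map such that g ∘ f is injective, Ext^i_R(coker (g ∘ f), N) = 0 for all i ≥ 1, and Ext^i_R(coker g, N) = 0 for all i ≥ 1. Then f is injective and Ext^i_R(coker f, N) = 0 for all i ≥ 1. (Coherence of the class of monomorphisms whose cokernel lies in the Ext-orthogonality class of N.) -/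
open CategoryTheory

universe u

namespace Paper

lemma isZero_ext_iff_cocycle {R : Type u} [Ring R] {X : ModuleCat.{u} R}
    (P : ProjectiveResolution X) (Y : ModuleCat.{u} R) (n : ℕ) :
    Limits.IsZero (((Ext ℤ (ModuleCat.{u} R) (n + 1)).obj (Opposite.op X)).obj Y) ↔
      ∀ f : P.complex.X (n + 1) ⟶ Y, P.complex.d (n + 2) (n + 1) ≫ f = 0 →
        ∃ g : P.complex.X n ⟶ Y, P.complex.d (n + 1) n ≫ g = f := by
  rw [(P.isoExt (n + 1) Y).isZero_iff, ← HomologicalComplex.exactAt_iff_isZero_homology,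
    HomologicalComplex.exactAt_iff' _ n (n + 1) (n + 2) (by simp) (by simp),
    ShortComplex.moduleCat_exact_iff]
  exact Iff.rfl

lemma isZero_ext_iff_subsingleton {R : Type u} [Ring R] (X Y : ModuleCat.{u} R) (n : ℕ) :
    Limits.IsZero (((Ext ℤ (ModuleCat.{u} R) (n + 1)).obj (Opposite.op X)).obj Y) ↔
      ∀ a : Abelian.Ext X Y (n + 1), a = 0 := by
  let P := ProjectiveResolution.of X
  rw [isZero_ext_iff_cocycle P]
  constructor
  · intro h a
    obtain ⟨f, hf, rfl⟩ := P.extMk_surjective a (n + 2) rfl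
    exact (P.extMk_eq_zero_iff f (n + 2) rfl hf n rfl).2 (h f hf)
  · intro h f hf
    exact (P.extMk_eq_zero_iff f (n + 2) rfl hf n rfl).1 (h _)

/-- Coherence of the class of monomorphisms whose cokernel lies in the
Ext-orthogonality class of `N`. -/
theorem extVanishes_cokernel_coherent
    {R : Type u} [Ring R] (N : Type u) [AddCommGroup N] [Module R N]
    {A B C : Type u} [AddCommGroup A] [Module R A] [AddCommGroup B] [Module R B]
    [AddCommGroup C] [Module R C]
    (f : A →ₗ[R] B) (g : B →ₗ[R] C)
    (hg : Function.Injective g) (hgf : Function.Injective (g ∘ₗ f))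
    (hgfE : ExtVanishes R (C ⧸ LinearMap.range (g ∘ₗ f)) N)
    (hgE : ExtVanishes R (C ⧸ LinearMap.range g) N) :
    Function.Injective f ∧ ExtVanishes R (B ⧸ LinearMap.range f) N := by
  refine ⟨fun x y h => hgf (by simp [h]), ?_⟩
  have hle : LinearMap.range f ≤ (LinearMap.range (g ∘ₗ f)).comap g := by
    rintro _ ⟨a, rfl⟩
    exact ⟨a, rfl⟩
  have hle' : LinearMap.range (g ∘ₗ f) ≤ LinearMap.range g := LinearMap.range_comp_le_range f g
  let i : (B ⧸ LinearMap.range f) →ₗ[R] (C ⧸ LinearMap.range (g ∘ₗ f)) :=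
    Submodule.mapQ _ _ g hle
  let p : (C ⧸ LinearMap.range (g ∘ₗ f)) →ₗ[R] (C ⧸ LinearMap.range g) :=
    Submodule.factor hle'
  have hi : Function.Injective i := by
    rw [injective_iff_map_eq_zero]
    intro x hx
    obtain ⟨b, rfl⟩ := Submodule.Quotient.mk_surjective _ x
    have hx' : g b ∈ LinearMap.range (g ∘ₗ f) :=
      (Submodule.Quotient.mk_eq_zero _).1 hx
    obtain ⟨a, ha⟩ := hx'
    exact (Submodule.Quotient.mk_eq_zero _).2 ⟨a, hg ha⟩
  have hp : Function.Surjective p := by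
    intro x
    obtain ⟨c, rfl⟩ := Submodule.Quotient.mk_surjective _ x
    exact ⟨Submodule.Quotient.mk c, rfl⟩
  have hpi : p ∘ₗ i = 0 := by
    ext b
    exact (Submodule.Quotient.mk_eq_zero _).2 ⟨b, rfl⟩
  have hex : ∀ x, p x = 0 → ∃ y, i y = x := by
    intro x hx
    obtain ⟨c, rfl⟩ := Submodule.Quotient.mk_surjective _ x
    have hx' : c ∈ LinearMap.range g := (Submodule.Quotient.mk_eq_zero _).1 hx
    obtain ⟨b, rfl⟩ := hx'
    exact ⟨Submodule.Quotient.mk b, rfl⟩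
  let S : ShortComplex (ModuleCat.{u} R) :=
    ShortComplex.mk (ModuleCat.ofHom i) (ModuleCat.ofHom p)
      (by rw [← ModuleCat.ofHom_comp, hpi]; rfl)
  have hS : S.ShortExact :=
    { exact := (ShortComplex.moduleCat_exact_iff S).2 hex
      mono_f := (ModuleCat.mono_iff_injective _).2 hi
      epi_g := (ModuleCat.epi_iff_surjective _).2 hp }
  intro k hk
  obtain ⟨n, rfl⟩ : ∃ n, k = n + 1 := ⟨k - 1, by omega⟩
  refine (isZero_ext_iff_subsingleton _ _ n).2 fun a => ?_
  have h3 := (isZero_ext_iff_subsingleton _ _ (n + 1)).1 (hgE (n + 1 + 1) (by omega))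
  have h2 := (isZero_ext_iff_subsingleton _ _ n).1 (hgfE (n + 1) (by omega))
  obtain ⟨b, hb⟩ := Abelian.Ext.contravariant_sequence_exact₁ hS (ModuleCat.of R N) a
    (n₁ := n + 1 + 1) (by omega) (h3 _)
  rw [← hb, h2 b]
  exact Abelian.Ext.comp_zero (Abelian.Ext.mk₀ S.f) _ _ _ _

end Paper
end

section
/- Let R be a ring and N an R-module. Suppose f: A → B is a retract of f': A' → B' in the arrow category of R-modules: there are R-linear maps i_A: A → A', i_B: B → B', r_A: A' → A, r_B: B' → B with i_B ∘ f = f' ∘ i_A, r_B ∘ f' = f ∘ r_A, r_A ∘ i_A = id_A, and r_B ∘ i_B = id_B. If f' is injective and Ext^i_R(coker f', N) = 0 for all i ≥ 1, then f is injective and Ext^i_R(coker f, N) = 0 for all i ≥ 1. (The class of monomorphisms whose cokernel lies in the Ext-orthogonality class of N is retract-closed.) -/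
open CategoryTheory

universe u

namespace Paper

/-- The class of monomorphisms whose cokernel lies in the Ext-orthogonality
class of `N` is closed under retracts in the arrow category. -/
theorem extVanishes_cokernel_retract
    {R : Type u} [Ring R] (N : Type u) [AddCommGroup N] [Module R N]
    {A B A' B' : Type u} [AddCommGroup A] [Module R A] [AddCommGroup B] [Module R B]
    [AddCommGroup A'] [Module R A'] [AddCommGroup B'] [Module R B']
    (f : A →ₗ[R] B) (f' : A' →ₗ[R] B')
    (iA : A →ₗ[R] A') (iB : B →ₗ[R] B') (rA : A' →ₗ[R] A) (rB : B' →ₗ[R] B)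
    (hi : iB ∘ₗ f = f' ∘ₗ iA) (hr : rB ∘ₗ f' = f ∘ₗ rA)
    (hrA : rA ∘ₗ iA = LinearMap.id) (hrB : rB ∘ₗ iB = LinearMap.id)
    (hf' : Function.Injective f')
    (hE' : ExtVanishes R (B' ⧸ LinearMap.range f') N) :
    Function.Injective f ∧ ExtVanishes R (B ⧸ LinearMap.range f) N := by
  refine ⟨fun x y h => ?_, fun n hn => ?_⟩
  · have h1 : iA x = iA y := by
      apply hf'
      have hx := LinearMap.congr_fun hi x
      have hy := LinearMap.congr_fun hi y
      simp only [LinearMap.comp_apply] at hx hy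
      rw [← hx, ← hy, h]
    have hx := LinearMap.congr_fun hrA x
    have hy := LinearMap.congr_fun hrA y
    simp only [LinearMap.comp_apply, LinearMap.id_apply] at hx hy
    rw [← hx, ← hy, h1]
  · have hI : LinearMap.range f ≤ (LinearMap.range f').comap iB := by
      rintro _ ⟨a, rfl⟩
      exact ⟨iA a, (LinearMap.congr_fun hi a).symm⟩
    have hR : LinearMap.range f' ≤ (LinearMap.range f).comap rB := by
      rintro _ ⟨a, rfl⟩
      exact ⟨rA a, (LinearMap.congr_fun hr a).symm⟩
    let s : ModuleCat.of R (B ⧸ LinearMap.range f) ⟶ ModuleCat.of R (B' ⧸ LinearMap.range f') :=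
      ModuleCat.ofHom (Submodule.mapQ _ _ iB hI)
    let r : ModuleCat.of R (B' ⧸ LinearMap.range f') ⟶ ModuleCat.of R (B ⧸ LinearMap.range f) :=
      ModuleCat.ofHom (Submodule.mapQ _ _ rB hR)
    have hsr : s ≫ r = 𝟙 _ := by
      ext x
      exact congrArg (Submodule.Quotient.mk (p := LinearMap.range f)) (LinearMap.congr_fun hrB x)
    let F := (Ext ℤ (ModuleCat.{u} R) n).flip.obj (ModuleCat.of R N)
    have hZ : Limits.IsZero (F.obj (Opposite.op (ModuleCat.of R (B' ⧸ LinearMap.range f')))) :=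
      hE' n hn
    have hF : F.map r.op ≫ F.map s.op = 𝟙 _ := by
      rw [← F.map_comp, ← op_comp, hsr, op_id, F.map_id]
    have : Limits.IsZero (F.obj (Opposite.op (ModuleCat.of R (B ⧸ LinearMap.range f)))) := by
      rw [Limits.IsZero.iff_id_eq_zero, ← hF, hZ.eq_of_tgt (F.map r.op) 0, Limits.zero_comp]
    exact this

end Paper
end
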